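/- Let u be a pair potential that is stable with constant B ≥ 0 and regular, let Λ ⊂ ℝ^d be bounded and measurable, and assume Ξ_Λ(z) ≠ 0 for all |z| < z₀. Then for every z ∈ ℂ with |z| < z₀ the family (θ_Λ^{(n)}(z;·))_{n≥1} satisfies the finite-volume Kirkwood–Salsburg equations: for all x ∈ Λ, θ_Λ^{(1)}(z; x) = z ( 1 + Σ_{k≥1} (1/k!) ∫_{Λ^k} Π_{j=1}^k f_β(x − y_j) · θ_Λ^{(k)}(z; y_1,…,y_k) dy_1⋯dy_k ), and for all n ≥ 1 and x, x_1,…,x_n ∈ Λ, θ_Λ^{(n+1)}(z; x, x_1,…,x_n) = z e^{−β Σ_{i=1}^n u(x − x_i)} ( θ_Λ^{(n)}(z; x_1,…,x_n) + Σ_{k≥1} (1/k!) ∫_{Λ^k} Π_{j=1}^k f_β(x − y_j) · θ_Λ^{(n+k)}(z; x_1,…,x_n, y_1,…,y_k) dy_1⋯dy_k ), all series converging absolutely. -/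

import Mathlib

open MeasureTheory Bornology

noncomputable section

/-- Boltzmann factor `e^{-β t}` with the convention `e^{-β(+∞)} = 0`. -/
def boltz (β : ℝ) (t : EReal) : ℝ :=
  if t = ⊤ then 0 else Real.exp (-β * t.toReal)

/-- Hamiltonian of a pair potential: `H(x₁,…,xₙ) = ∑_{i<j} u(xᵢ - xⱼ)`. -/
def Ham {d : ℕ} (u : (Fin d → ℝ) → EReal) (n : ℕ) (x : Fin n → (Fin d → ℝ)) : EReal :=
  ∑ p ∈ Finset.univ.filter (fun p : Fin n × Fin n => p.1 < p.2), u (x p.1 - x p.2)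

/-- A pair potential: even, measurable, bounded from below. -/
def IsPairPotential {d : ℕ} (u : (Fin d → ℝ) → EReal) : Prop :=
  Measurable u ∧ (∀ x, u (-x) = u x) ∧ ∃ m : ℝ, ∀ x, (m : EReal) ≤ u x

/-- Stability with constant `B`: `H(x₁,…,xₙ) ≥ -Bn`. -/
def IsStable {d : ℕ} (u : (Fin d → ℝ) → EReal) (B : ℝ) : Prop :=
  ∀ (n : ℕ) (x : Fin n → (Fin d → ℝ)), ((-(B * n) : ℝ) : EReal) ≤ Ham u n x

/-- Mayer function `f_β = e^{-βu} - 1`. -/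
def mayer {d : ℕ} (β : ℝ) (u : (Fin d → ℝ) → EReal) (x : Fin d → ℝ) : ℝ :=
  boltz β (u x) - 1

/-- Regularity: the Mayer function is integrable. -/
def IsRegularPP {d : ℕ} (β : ℝ) (u : (Fin d → ℝ) → EReal) : Prop :=
  Integrable (mayer β u)

/-- `C_β(u) = ∫ |e^{-βu} - 1|`. -/
def Creg {d : ℕ} (β : ℝ) (u : (Fin d → ℝ) → EReal) : ℝ :=
  ∫ x, |mayer β u x|

/-- The cartesian power `Λ^k`. -/
def cube {d : ℕ} (Λ : Set (Fin d → ℝ)) (k : ℕ) : Set (Fin k → (Fin d → ℝ)) :=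
  Set.univ.pi fun _ => Λ

/-- Grand canonical partition function `Ξ_Λ(z)`. -/
def Xi {d : ℕ} (β : ℝ) (u : (Fin d → ℝ) → EReal) (Λ : Set (Fin d → ℝ)) (z : ℂ) : ℂ :=
  ∑' k : ℕ, z ^ k / (Nat.factorial k : ℂ) *
    ((∫ y in cube Λ k, boltz β (Ham u k y) : ℝ) : ℂ)

/-- `θ_Λ^{(n)}(z; x₁,…,xₙ)`. -/
def theta {d : ℕ} (β : ℝ) (u : (Fin d → ℝ) → EReal) (Λ : Set (Fin d → ℝ)) (n : ℕ)
    (z : ℂ) (x : Fin n → (Fin d → ℝ)) : ℂ :=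
  (Xi β u Λ z)⁻¹ * ∑' k : ℕ, z ^ (n + k) / (Nat.factorial k : ℂ) *
    ((∫ y in cube Λ k, boltz β (Ham u (n + k) (Fin.append x y)) : ℝ) : ℂ)

end

section aux

lemma ks_boltz_add (β : ℝ) {a b : EReal} (ha : a ≠ ⊥) (hb : b ≠ ⊥) :
    boltz β (a + b) = boltz β a * boltz β b := by
  unfold boltz
  by_cases h1 : a = ⊤
  · subst h1; simp [EReal.top_add_of_ne_bot hb]
  by_cases h2 : b = ⊤
  · subst h2; simp [EReal.add_top_of_ne_bot ha]
  lift a to ℝ using ⟨h1, ha⟩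
  lift b to ℝ using ⟨h2, hb⟩
  have h3 : ((a : EReal) + b) = ((a + b : ℝ) : EReal) := by simp
  rw [h3]
  simp only [EReal.coe_ne_top, if_false, EReal.toReal_coe]
  rw [← Real.exp_add]; ring_nf

lemma ks_sum_ne_bot {ι : Type*} (s : Finset ι) (f : ι → EReal) (h : ∀ i, f i ≠ ⊥) :
    ∑ i ∈ s, f i ≠ ⊥ := by
  classical
  induction s using Finset.induction_on with
  | empty => simp
  | insert a s ha ih =>
    rw [Finset.sum_insert ha, Ne, EReal.add_eq_bot_iff]
    simp [h a, ih]

lemma ks_boltz_zero (β : ℝ) : boltz β 0 = 1 := by simp [boltz]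

lemma ks_boltz_sum {ι : Type*} (β : ℝ) (s : Finset ι) (f : ι → EReal) (h : ∀ i, f i ≠ ⊥) :
    boltz β (∑ i ∈ s, f i) = ∏ i ∈ s, boltz β (f i) := by
  classical
  induction s using Finset.induction_on with
  | empty => simp [boltz]
  | insert a s ha ih =>
    rw [Finset.sum_insert ha, Finset.prod_insert ha,
      ks_boltz_add β (h a) (ks_sum_ne_bot s f h), ih]

lemma ks_boltz_nonneg (β : ℝ) (t : EReal) : 0 ≤ boltz β t := by
  unfold boltz; split_ifs <;> positivity

lemma ks_boltz_le {β : ℝ} (hβ : 0 < β) {t : EReal} {c : ℝ} (h : (c : EReal) ≤ t) :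
    boltz β t ≤ Real.exp (-β * c) := by
  unfold boltz
  split_ifs with h1
  · positivity
  · have h2 : t ≠ ⊥ := by rintro rfl; simp at h
    lift t to ℝ using ⟨h1, h2⟩
    have := EReal.coe_le_coe_iff.1 h
    simp only [EReal.toReal_coe]
    apply Real.exp_le_exp.2
    nlinarith

lemma ks_boltz_meas (β : ℝ) : Measurable (boltz β) := by
  unfold boltz
  refine Measurable.ite (measurableSet_eq) measurable_const ?_
  exact Real.measurable_exp.comp (measurable_const.mul measurable_ereal_toReal)

variable {d : ℕ}

lemma ks_Ham_perm {u : (Fin d → ℝ) → EReal} (hu : ∀ x, u (-x) = u x) {N N' : ℕ}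
    (e : Fin N ≃ Fin N') (x : Fin N' → (Fin d → ℝ)) :
    Ham u N (x ∘ e) = Ham u N' x := by
  have key : ∀ (M : ℕ) (x : Fin M → (Fin d → ℝ)), Ham u M x =
      ∑ i ∈ (Finset.univ : Finset (Fin M)).sym2 with ¬ i.IsDiag,
        Sym2.lift ⟨fun i j => u (x i - x j), fun i j => by simp only []; rw [← hu, neg_sub]⟩ i := by
    intro M x
    rw [Finset.sum_sym2_filter_not_isDiag]
    unfold Ham
    apply Finset.sum_congr
    · ext p; simp only [Finset.mem_filter, Finset.mem_univ, true_and, Finset.mem_offDiag]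
      exact ⟨fun h => ⟨h.ne, h⟩, fun h => h.2⟩
    · intros; simp
  rw [key, key]
  refine Finset.sum_equiv ⟨Sym2.map e, Sym2.map e.symm, fun i => by simp [Sym2.map_map],
    fun i => by simp [Sym2.map_map]⟩ ?_ ?_
  · intro i
    induction i using Sym2.ind with
    | _ a b => simp
  · intro i _
    induction i using Sym2.ind with
    | _ a b => simp

lemma ks_Ham_cons (u : (Fin d → ℝ) → EReal) (n : ℕ) (x : Fin d → ℝ) (xs : Fin n → (Fin d → ℝ)) :
    Ham u (n + 1) (Fin.cons x xs : Fin (n + 1) → (Fin d → ℝ)) = ∑ i, u (x - xs i) + Ham u n xs := by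
  unfold Ham
  rw [Finset.sum_filter, Finset.sum_filter, Fintype.sum_prod_type, Fintype.sum_prod_type,
    Fin.sum_univ_succ]
  simp [Fin.sum_univ_succ, Fin.succ_lt_succ_iff, Fin.succ_pos]

lemma ks_Ham_meas {u : (Fin d → ℝ) → EReal} (hu : Measurable u) (n : ℕ) :
    Measurable (Ham u n) := by
  unfold Ham
  apply Finset.measurable_fun_sum
  intro p _
  exact hu.comp (by fun_prop)

lemma ks_append_meas {E : Type*} [MeasurableSpace E] (n k : ℕ) :
    Measurable (fun p : (Fin n → E) × (Fin k → E) => Fin.append p.1 p.2) := by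
  rw [measurable_pi_iff]
  intro i
  refine Fin.addCases (fun j => ?_) (fun j => ?_) i
  · simp only [Fin.append_left]; fun_prop
  · simp only [Fin.append_right]; fun_prop

/-- splitting an integral over `Fin k → E` along a finset -/
lemma ks_split {E : Type*} [MeasurableSpace E] (ν : Measure E) [IsFiniteMeasure ν] {l m k : ℕ}
    (e : Fin l ⊕ Fin m ≃ Fin k) (F : (Fin k → E) → ℝ) (hF : Measurable F) {C : ℝ}
    (hC : ∀ y, ‖F y‖ ≤ C) :
    ∫ y, F y ∂(Measure.pi fun _ => ν) =
      ∫ y1, ∫ y2, F (Sum.elim y1 y2 ∘ e.symm) ∂(Measure.pi fun _ : Fin m => ν)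
        ∂(Measure.pi fun _ : Fin l => ν) := by
  have h1 := (measurePreserving_piCongrLeft (fun _ : Fin k => ν) e)
  have h2 := (measurePreserving_sumPiEquivProdPi_symm (fun _ : Fin l ⊕ Fin m => ν))
  rw [← h1.integral_comp (MeasurableEquiv.measurableEmbedding _),
    ← h2.integral_comp (MeasurableEquiv.measurableEmbedding _)]
  have h3 : ∀ p : (Fin l → E) × (Fin m → E),
      (MeasurableEquiv.piCongrLeft (fun _ => E) e)
        ((MeasurableEquiv.sumPiEquivProdPi fun _ : Fin l ⊕ Fin m => E).symm p) =
      Sum.elim p.1 p.2 ∘ e.symm := by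
    intro p
    funext i
    obtain ⟨i, rfl⟩ := e.surjective i
    rw [MeasurableEquiv.piCongrLeft_apply_apply]
    rcases i with i | i <;> simp [MeasurableEquiv.sumPiEquivProdPi, Equiv.sumPiEquivProdPi]
  rw [integral_prod]
  · simp only [h3]
  · refine Integrable.of_bound (C := C) ?_ (Filter.Eventually.of_forall fun p => hC _)
    apply Measurable.aestronglyMeasurable
    exact hF.comp ((MeasurableEquiv.measurable _).comp (MeasurableEquiv.measurable _))

end aux

section aux2
variable {d : ℕ}

noncomputable def ksA (β : ℝ) (u : (Fin d → ℝ) → EReal) (ν : Measure (Fin d → ℝ)) (n : ℕ)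
    (x : Fin d → ℝ) (xs : Fin n → (Fin d → ℝ)) (l m : ℕ) : ℝ :=
  ∫ y1, (∏ j, mayer β u (x - y1 j)) *
    ∫ y2, boltz β (Ham u (n + l + m) (Fin.append (Fin.append xs y1) y2))
      ∂(Measure.pi fun _ : Fin m => ν) ∂(Measure.pi fun _ : Fin l => ν)

lemma ks_boltz_cons (β : ℝ) {u : (Fin d → ℝ) → EReal} (hu : IsPairPotential u) (n k : ℕ)
    (x : Fin d → ℝ) (xs : Fin n → (Fin d → ℝ)) (y : Fin k → (Fin d → ℝ)) :
    boltz β (Ham u (n + 1 + k) (Fin.append (Fin.cons x xs) y)) =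
      boltz β (∑ i, u (x - xs i)) * ((∏ j, (mayer β u (x - y j) + 1)) *
        boltz β (Ham u (n + k) (Fin.append xs y))) := by
  have hb : ∀ x, u x ≠ ⊥ := by
    obtain ⟨m, hm⟩ := hu.2.2
    intro x h
    have := hm x
    rw [h] at this
    simp at this
  rw [Fin.append_cons]
  have := ks_Ham_perm hu.2.1 (finCongr (Nat.add_right_comm n 1 k))
    (Fin.cons x (Fin.append xs y) : Fin (n + k + 1) → (Fin d → ℝ))
  have h2 : Ham u (n + 1 + k) ((Fin.cons x (Fin.append xs y) : Fin (n + k + 1) → (Fin d → ℝ)) ∘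
      Fin.cast (Nat.add_right_comm n 1 k)) = _ := this
  have hH : Ham u (n + k) (Fin.append xs y) ≠ ⊥ := ks_sum_ne_bot _ _ fun _ => hb _
  have hS : ∀ (r : ℕ) (v : Fin r → (Fin d → ℝ)), ∑ i, u (x - v i) ≠ ⊥ :=
    fun r v => ks_sum_ne_bot _ _ fun _ => hb _
  rw [h2, ks_Ham_cons, ks_boltz_add β (hS _ _) hH, Fin.sum_univ_add]
  simp only [Fin.append_left, Fin.append_right]
  rw [ks_boltz_add β (hS _ _) (hS _ _),
    ks_boltz_sum β _ (fun j => u (x - y j)) fun _ => hb _, mul_assoc]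
  simp [mayer]

lemma ks_mayer_meas (β : ℝ) {u : (Fin d → ℝ) → EReal} (hu : IsPairPotential u) :
    Measurable (mayer β u) :=
  ((ks_boltz_meas β).comp hu.1).sub measurable_const

lemma ks_mayer_bound {β : ℝ} (hβ : 0 < β) {u : (Fin d → ℝ) → EReal} (hu : IsPairPotential u) :
    ∃ M : ℝ, 1 ≤ M ∧ ∀ x, ‖mayer β u x‖ ≤ M := by
  obtain ⟨m, hm⟩ := hu.2.2
  refine ⟨Real.exp (-β * m) + 1, by linarith [Real.exp_pos (-β * m)], fun x => ?_⟩
  have h1 := ks_boltz_nonneg β (u x)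
  have h2 := ks_boltz_le hβ (hm x)
  rw [Real.norm_eq_abs, abs_le]
  unfold mayer
  constructor <;> linarith [Real.exp_pos (-β * m)]

lemma ks_stab {β B : ℝ} (hβ : 0 < β) {u : (Fin d → ℝ) → EReal} (hstab : IsStable u B) (n : ℕ)
    (x : Fin n → (Fin d → ℝ)) : ‖boltz β (Ham u n x)‖ ≤ Real.exp (β * B) ^ n := by
  rw [Real.norm_of_nonneg (ks_boltz_nonneg _ _), ← Real.exp_nat_mul]
  refine (ks_boltz_le hβ (hstab n x)).trans (le_of_eq ?_)
  ring_nf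

lemma ks_prod_bound {ι : Type*} (t : Finset ι) (f : ι → ℝ) {M : ℝ} (h : ∀ i, ‖f i‖ ≤ M) :
    ‖∏ i ∈ t, f i‖ ≤ M ^ t.card := by
  rw [norm_prod]
  calc _ ≤ ∏ i ∈ t, M := Finset.prod_le_prod (fun _ _ => norm_nonneg _) fun i _ => h i
    _ = _ := by simp

lemma ks_expand {β B : ℝ} (hβ : 0 < β) {u : (Fin d → ℝ) → EReal} (hu : IsPairPotential u)
    (hstab : IsStable u B) (ν : Measure (Fin d → ℝ)) [IsFiniteMeasure ν] (n k : ℕ)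
    (x : Fin d → ℝ) (xs : Fin n → (Fin d → ℝ)) :
    ∫ y, boltz β (Ham u (n + 1 + k) (Fin.append (Fin.cons x xs) y))
        ∂(Measure.pi fun _ : Fin k => ν) =
      boltz β (∑ i, u (x - xs i)) *
        ∑ p ∈ Finset.HasAntidiagonal.antidiagonal k, (k.choose p.1 : ℝ) * ksA β u ν n x xs p.1 p.2 := by
  obtain ⟨M, hM1, hM⟩ := ks_mayer_bound hβ hu
  have hmeas : ∀ t : Finset (Fin k), Measurable fun y : Fin k → (Fin d → ℝ) =>
      (∏ j ∈ t, mayer β u (x - y j)) * boltz β (Ham u (n + k) (Fin.append xs y)) := by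
    intro t
    refine Measurable.mul ?_ ?_
    · apply Finset.measurable_fun_prod
      intro j _
      exact (ks_mayer_meas β hu).comp (by fun_prop)
    · exact (ks_boltz_meas β).comp ((ks_Ham_meas hu.1 _).comp
        ((ks_append_meas n k).comp (by fun_prop : Measurable fun y => (xs, y))))
  have hbd : ∀ t : Finset (Fin k), ∀ y : Fin k → (Fin d → ℝ),
      ‖(∏ j ∈ t, mayer β u (x - y j)) * boltz β (Ham u (n + k) (Fin.append xs y))‖ ≤
        M ^ t.card * Real.exp (β * B) ^ (n + k) := by
    intro t y
    rw [norm_mul]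
    gcongr
    · exact ks_prod_bound _ _ fun _ => hM _
    · exact ks_stab hβ hstab _ _
  simp_rw [ks_boltz_cons β hu, integral_const_mul, Finset.prod_add_one, Finset.sum_mul]
  congr 1
  rw [integral_finsetSum]
  swap
  · intro t _
    exact Integrable.of_bound (hmeas t).aestronglyMeasurable _
      (Filter.Eventually.of_forall (hbd t))
  have hterm : ∀ t : Finset (Fin k), ∫ y, (∏ j ∈ t, mayer β u (x - y j)) *
      boltz β (Ham u (n + k) (Fin.append xs y)) ∂(Measure.pi fun _ : Fin k => ν) =
      ksA β u ν n x xs t.card (k - t.card) := by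
    intro t
    have hc : tᶜ.card = k - t.card := by simp [Finset.card_compl]
    have hle : t.card ≤ k := by simpa using Finset.card_le_univ t
    let e := finSumEquivOfFinset (s := t) rfl hc
    rw [ks_split ν e _ (hmeas t) (hbd t)]
    unfold ksA
    congr 1
    funext y1
    rw [← integral_const_mul]
    congr 1
    funext y2
    congr 1
    · rw [← Finset.prod_coe_sort]
      refine (Fintype.prod_equiv (t.orderIsoOfFin rfl).toEquiv _ _ fun j => ?_).symm
      have : ((t.orderIsoOfFin rfl).toEquiv j : Fin k) = e (Sum.inl j) := by
        simp [e, finSumEquivOfFinset_inl]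
      rw [this]
      simp
    · congr 1
      let e' : Fin (n + t.card + (k - t.card)) ≃ Fin (n + k) :=
        finSumFinEquiv.symm.trans <| (Equiv.sumCongr finSumFinEquiv.symm (Equiv.refl _)).trans <|
          (Equiv.sumAssoc _ _ _).trans <| (Equiv.sumCongr (Equiv.refl _) e).trans finSumFinEquiv
      rw [← ks_Ham_perm hu.2.1 e']
      congr 1
      funext i
      refine Fin.addCases (fun i => ?_) (fun i => ?_) i
      · refine Fin.addCases (fun i => ?_) (fun i => ?_) i
        · simp [e']
        · simp [e']
      · simp [e']
  simp_rw [hterm]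
  rw [Finset.sum_powerset_apply_card (fun l => ksA β u ν n x xs l (k - l)),
    Finset.Nat.sum_antidiagonal_eq_sum_range_succ
      (fun l m => (k.choose l : ℝ) * ksA β u ν n x xs l m)]
  simp

end aux2

section aux3
variable {d : ℕ}

noncomputable def ksJ (β : ℝ) (u : (Fin d → ℝ) → EReal) (ν : Measure (Fin d → ℝ)) (n : ℕ)
    (z : ℂ) (x : Fin n → (Fin d → ℝ)) : ℂ :=
  ∑' k : ℕ, z ^ (n + k) / (Nat.factorial k : ℂ) *
    ((∫ y, boltz β (Ham u (n + k) (Fin.append x y)) ∂(Measure.pi fun _ : Fin k => ν) : ℝ) : ℂ)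

lemma ks_pi_real (ν : Measure (Fin d → ℝ)) [IsFiniteMeasure ν] (k : ℕ) :
    (Measure.pi fun _ : Fin k => ν).real Set.univ = ν.real Set.univ ^ k := by
  simp [Measure.real, Measure.pi_univ]

lemma ks_inner_bound {β B : ℝ} (hβ : 0 < β) {u : (Fin d → ℝ) → EReal}
    (hstab : IsStable u B) (ν : Measure (Fin d → ℝ)) [IsFiniteMeasure ν] (N m : ℕ)
    (x : Fin N → (Fin d → ℝ)) :
    ‖∫ y, boltz β (Ham u (N + m) (Fin.append x y)) ∂(Measure.pi fun _ : Fin m => ν)‖ ≤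
      Real.exp (β * B) ^ (N + m) * ν.real Set.univ ^ m := by
  rw [← ks_pi_real]
  exact norm_integral_le_of_norm_le_const
    (Filter.Eventually.of_forall fun y => ks_stab hβ hstab _ _)

lemma ks_inner_meas {β : ℝ} {u : (Fin d → ℝ) → EReal} (hu : IsPairPotential u)
    (ν : Measure (Fin d → ℝ)) [IsFiniteMeasure ν] (n l m : ℕ)
    (xs : Fin n → (Fin d → ℝ)) :
    Measurable fun y1 : Fin l → (Fin d → ℝ) =>
      ∫ y2, boltz β (Ham u (n + l + m) (Fin.append (Fin.append xs y1) y2))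
        ∂(Measure.pi fun _ : Fin m => ν) := by
  apply StronglyMeasurable.measurable
  apply StronglyMeasurable.integral_prod_right'
    (f := fun p : (Fin l → (Fin d → ℝ)) × (Fin m → (Fin d → ℝ)) =>
      boltz β (Ham u (n + l + m) (Fin.append (Fin.append xs p.1) p.2)))
  apply Measurable.stronglyMeasurable
  have h1 : Measurable fun p : (Fin l → (Fin d → ℝ)) × (Fin m → (Fin d → ℝ)) =>
      Fin.append xs p.1 :=
    (ks_append_meas n l).comp (Measurable.prodMk measurable_const measurable_fst)
  exact (ks_boltz_meas β).comp ((ks_Ham_meas hu.1 _).comp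
    ((ks_append_meas (n + l) m).comp (h1.prodMk measurable_snd)))

set_option maxHeartbeats 1000000 in
lemma ks_main {β B : ℝ} (hβ : 0 < β) {u : (Fin d → ℝ) → EReal} (hu : IsPairPotential u)
    (hstab : IsStable u B) (ν : Measure (Fin d → ℝ)) [IsFiniteMeasure ν] (n : ℕ) (z : ℂ)
    (x : Fin d → ℝ) (xs : Fin n → (Fin d → ℝ)) :
    Summable (fun l : ℕ => (1 / (Nat.factorial l : ℂ)) *
      ∫ y, (∏ j, ((mayer β u (x - y j) : ℝ) : ℂ)) * ksJ β u ν (n + l) z (Fin.append xs y)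
        ∂(Measure.pi fun _ : Fin l => ν)) ∧
    ksJ β u ν (n + 1) z (Fin.cons x xs) = z * ((boltz β (∑ i, u (x - xs i)) : ℝ) : ℂ) *
      ∑' l : ℕ, (1 / (Nat.factorial l : ℂ)) *
      ∫ y, (∏ j, ((mayer β u (x - y j) : ℝ) : ℂ)) * ksJ β u ν (n + l) z (Fin.append xs y)
        ∂(Measure.pi fun _ : Fin l => ν) := by
  obtain ⟨M, hM1, hM⟩ := ks_mayer_bound hβ hu
  set V := ν.real Set.univ with hV
  have hV0 : 0 ≤ V := measureReal_nonneg
  set E := Real.exp (β * B) with hE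
  have hE0 : 0 < E := Real.exp_pos _
  let F : (l m : ℕ) → (Fin l → (Fin d → ℝ)) → ℝ := fun l m y1 =>
    (∏ j, mayer β u (x - y1 j)) *
    ∫ y2, boltz β (Ham u (n + l + m) (Fin.append (Fin.append xs y1) y2))
      ∂(Measure.pi fun _ : Fin m => ν)
  have hFm : ∀ l m, Measurable (F l m) := by
    intro l m
    refine Measurable.mul ?_ (ks_inner_meas hu ν n l m xs)
    apply Finset.measurable_fun_prod
    intro j _
    exact (ks_mayer_meas β hu).comp (by fun_prop)
  have hFb : ∀ l m y, ‖F l m y‖ ≤ M ^ l * (E ^ (n + l + m) * V ^ m) := by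
    intro l m y
    simp only [F]
    rw [norm_mul]
    gcongr
    · simpa using ks_prod_bound Finset.univ (fun j => mayer β u (x - y j)) fun _ => hM _
    · exact ks_inner_bound hβ hstab ν _ _ _
  have hFi : ∀ l m, Integrable (F l m) (Measure.pi fun _ : Fin l => ν) := fun l m =>
    Integrable.of_bound (hFm l m).aestronglyMeasurable _ (Filter.Eventually.of_forall (hFb l m))
  let a : ℕ × ℕ → ℂ := fun p => 1 / (Nat.factorial p.1 : ℂ) *
    (z ^ (n + p.1 + p.2) / (Nat.factorial p.2 : ℂ) * (ksA β u ν n x xs p.1 p.2 : ℂ))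
  have hFn : ∀ l m, ∫ y, ‖F l m y‖ ∂(Measure.pi fun _ : Fin l => ν) ≤
      M ^ l * (E ^ (n + l + m) * V ^ m) * V ^ l := by
    intro l m
    have := norm_integral_le_of_norm_le_const (μ := Measure.pi fun _ : Fin l => ν)
      (f := fun y => ‖F l m y‖)
      (Filter.Eventually.of_forall fun y => by rw [norm_norm]; exact hFb l m y)
    rw [ks_pi_real] at this
    exact (le_abs_self _).trans this
  have hAb : ∀ l m, ‖ksA β u ν n x xs l m‖ ≤ M ^ l * (E ^ (n + l + m) * V ^ m) * V ^ l :=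
    fun l m => (norm_integral_le_integral_norm _).trans (hFn l m)
  have hs1 := Real.summable_pow_div_factorial (‖z‖ * E * M * V)
  have hs2 := Real.summable_pow_div_factorial (‖z‖ * E * V)
  have hz0 := norm_nonneg z
  have hM0 : 0 ≤ M := by linarith
  have ha : Summable a := by
    refine Summable.of_norm_bounded (((hs1.mul_of_nonneg hs2 ?_ ?_)).mul_left ((‖z‖ * E) ^ n)) ?_
    · intro l; simp only [Pi.zero_apply]; positivity
    · intro l; simp only [Pi.zero_apply]; positivity
    · rintro ⟨l, m⟩
      simp only [a, norm_mul, norm_div, norm_pow, norm_one, Complex.norm_natCast,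
        Complex.norm_real]
      calc _ ≤ 1 / (l.factorial : ℝ) * (‖z‖ ^ (n + l + m) / (m.factorial : ℝ) *
            (M ^ l * (E ^ (n + l + m) * V ^ m) * V ^ l)) := by
            gcongr
            exact hAb l m
        _ = _ := by field_simp; ring
  have hJ : ∀ l, HasSum (fun m => a (l, m)) ((1 / (Nat.factorial l : ℂ)) *
      ∫ y, (∏ j, ((mayer β u (x - y j) : ℝ) : ℂ)) * ksJ β u ν (n + l) z (Fin.append xs y)
        ∂(Measure.pi fun _ : Fin l => ν)) := by
    intro l
    suffices hh : HasSum (fun m : ℕ => z ^ (n + l + m) / (Nat.factorial m : ℂ) *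
        (ksA β u ν n x xs l m : ℂ))
        (∫ y, (∏ j, ((mayer β u (x - y j) : ℝ) : ℂ)) * ksJ β u ν (n + l) z (Fin.append xs y)
        ∂(Measure.pi fun _ : Fin l => ν)) by
      have h9 := hh.mul_left (1 / (Nat.factorial l : ℂ))
      simp only [a]
      exact h9
    have := hasSum_integral_of_summable_integral_norm (μ := Measure.pi fun _ : Fin l => ν)
      (F := fun m y => z ^ (n + l + m) / (Nat.factorial m : ℂ) * ((F l m y : ℝ) : ℂ))
      (fun m => ((hFi l m).ofReal).const_mul _) ?_
    · have e1 : ∀ m : ℕ, z ^ (n + l + m) / (Nat.factorial m : ℂ) * (ksA β u ν n x xs l m : ℂ) =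
          ∫ y, z ^ (n + l + m) / (Nat.factorial m : ℂ) * ((F l m y : ℝ) : ℂ)
            ∂(Measure.pi fun _ : Fin l => ν) := by
        intro m
        rw [integral_const_mul, integral_complex_ofReal]
        rfl
      have e2 : ∀ y : Fin l → (Fin d → ℝ), (∏ j, ((mayer β u (x - y j) : ℝ) : ℂ)) *
          ksJ β u ν (n + l) z (Fin.append xs y) =
          ∑' m : ℕ, z ^ (n + l + m) / (Nat.factorial m : ℂ) * ((F l m y : ℝ) : ℂ) := by
        intro y
        unfold ksJ
        rw [← tsum_mul_left]
        congr 1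
        funext m
        simp only [F]
        push_cast
        ring
      simp_rw [e1, e2]
      exact this
    · refine Summable.of_nonneg_of_le (fun m => integral_nonneg fun _ => norm_nonneg _) ?_
        (hs2.mul_left ((‖z‖ * E) ^ n * (‖z‖ * E * M * V) ^ l))
      intro m
      simp only [norm_mul, norm_div, norm_pow, Complex.norm_natCast, Complex.norm_real]
      rw [integral_const_mul]
      calc _ ≤ ‖z‖ ^ (n + l + m) / (m.factorial : ℝ) *
            (M ^ l * (E ^ (n + l + m) * V ^ m) * V ^ l) := by
            gcongr
            exact hFn l m
        _ = _ := by field_simp; ring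
  have hsum := ha.hasSum.prod_fiberwise hJ
  refine ⟨hsum.summable, ?_⟩
  rw [hsum.tsum_eq]
  have hanti : ∑' p, a p = ∑' k, ∑ p ∈ Finset.HasAntidiagonal.antidiagonal k, a p := by
    rw [← Finset.HasAntidiagonal.sigmaAntidiagonalEquivProd.tsum_eq a]
    refine (Summable.tsum_sigma' (fun k => (hasSum_fintype _).summable)
      (Finset.HasAntidiagonal.sigmaAntidiagonalEquivProd.summable_iff.2 ha)).trans ?_
    congr 1
    funext k
    rw [tsum_fintype]
    exact Finset.sum_coe_sort (Finset.HasAntidiagonal.antidiagonal k) a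
  rw [hanti, ← tsum_mul_left]
  unfold ksJ
  congr 1
  funext k
  rw [ks_expand hβ hu hstab]
  push_cast
  rw [Finset.mul_sum, Finset.mul_sum, Finset.mul_sum]
  apply Finset.sum_congr rfl
  rintro ⟨l, m⟩ hp
  rw [Finset.HasAntidiagonal.mem_antidiagonal] at hp
  simp only at hp
  subst hp
  simp only [a]
  have hc : ((l + m).choose l : ℂ) * (l.factorial : ℂ) * (m.factorial : ℂ) =
      ((l + m).factorial : ℂ) := by
    have := Nat.add_choose_mul_factorial_mul_factorial l m
    rw [Nat.choose_symm_add.symm] at this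
    exact_mod_cast this
  have h1 : (l.factorial : ℂ) ≠ 0 := by exact_mod_cast l.factorial_ne_zero
  have h2 : (m.factorial : ℂ) ≠ 0 := by exact_mod_cast m.factorial_ne_zero
  have h3 : ((l + m).factorial : ℂ) ≠ 0 := by exact_mod_cast (l + m).factorial_ne_zero
  rw [← hc] at h3 ⊢
  have h4 : ((l + m).choose l : ℂ) ≠ 0 := by
    intro h; apply h3; simp [h]
  field_simp
  ring

end aux3

section aux4
variable {d : ℕ}

lemma ks_restrict (Λ : Set (Fin d → ℝ)) (k : ℕ) :
    (volume : Measure (Fin k → (Fin d → ℝ))).restrict (cube Λ k) =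
      Measure.pi fun _ : Fin k => volume.restrict Λ :=
  Measure.restrict_pi_pi (fun _ : Fin k => (volume : Measure (Fin d → ℝ))) fun _ => Λ

lemma ks_theta (β : ℝ) (u : (Fin d → ℝ) → EReal) (Λ : Set (Fin d → ℝ)) (n : ℕ)
    (z : ℂ) (x : Fin n → (Fin d → ℝ)) :
    theta β u Λ n z x = (Xi β u Λ z)⁻¹ * ksJ β u (volume.restrict Λ) n z x := by
  unfold theta ksJ
  simp_rw [ks_restrict]

lemma ks_theta_cast (β : ℝ) (u : (Fin d → ℝ) → EReal) (Λ : Set (Fin d → ℝ)) {n n' : ℕ}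
    (z : ℂ) (h : n' = n) (x : Fin n → (Fin d → ℝ)) :
    theta β u Λ n' z (x ∘ Fin.cast h) = theta β u Λ n z x := by
  subst h; rfl

lemma ks_Ham_cast (u : (Fin d → ℝ) → EReal) {n n' : ℕ} (h : n' = n)
    (x : Fin n → (Fin d → ℝ)) : Ham u n' (x ∘ Fin.cast h) = Ham u n x := by
  subst h; rfl

lemma ks_theta_zero (β : ℝ) (u : (Fin d → ℝ) → EReal) (Λ : Set (Fin d → ℝ))
    (z : ℂ) (hX : Xi β u Λ z ≠ 0) : theta β u Λ 0 z Fin.elim0 = 1 := by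
  have : theta β u Λ 0 z Fin.elim0 = (Xi β u Λ z)⁻¹ * Xi β u Λ z := by
    unfold theta
    congr 1
    unfold Xi
    congr 1
    funext k
    simp_rw [Fin.elim0_append, ks_Ham_cast, Nat.zero_add]
  rw [this, inv_mul_cancel₀ hX]

/-- the Kirkwood–Salsburg equations in a form that covers `n = 0` as well -/
lemma ks_general {β B : ℝ} (hβ : 0 < β) {u : (Fin d → ℝ) → EReal} (hu : IsPairPotential u)
    (hstab : IsStable u B) (Λ : Set (Fin d → ℝ)) (hΛb : IsBounded Λ) (n : ℕ) (z : ℂ)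
    (x : Fin d → ℝ) (xs : Fin n → (Fin d → ℝ)) :
    Summable (fun k : ℕ =>
        ‖(1 / (Nat.factorial (k + 1) : ℂ)) *
          ∫ y in cube Λ (k + 1),
            (∏ j, ((mayer β u (x - y j) : ℝ) : ℂ)) *
              theta β u Λ (n + (k + 1)) z (Fin.append xs y)‖) ∧
      theta β u Λ (n + 1) z (Fin.cons x xs) =
        z * ((boltz β (∑ i, u (x - xs i)) : ℝ) : ℂ) *
          (theta β u Λ n z xs +
            ∑' k : ℕ, (1 / (Nat.factorial (k + 1) : ℂ)) *
              ∫ y in cube Λ (k + 1),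
                (∏ j, ((mayer β u (x - y j) : ℝ) : ℂ)) *
                  theta β u Λ (n + (k + 1)) z (Fin.append xs y)) := by
  have : IsFiniteMeasure ((volume : Measure (Fin d → ℝ)).restrict Λ) :=
    ⟨by rw [Measure.restrict_apply_univ]; exact hΛb.measure_lt_top⟩
  obtain ⟨h1, h2⟩ := ks_main hβ hu hstab (volume.restrict Λ) n z x xs
  have h3 : Summable (fun l : ℕ => (1 / (Nat.factorial l : ℂ)) *
      ∫ y in cube Λ l, (∏ j, ((mayer β u (x - y j) : ℝ) : ℂ)) *
        theta β u Λ (n + l) z (Fin.append xs y)) := by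
    refine (h1.mul_left (Xi β u Λ z)⁻¹).congr fun l => ?_
    simp_rw [ks_theta, ks_restrict, mul_left_comm _ (Xi β u Λ z)⁻¹]
    rw [integral_const_mul]
    ring
  refine ⟨((summable_nat_add_iff 1).2 h3).norm, ?_⟩
  have h4 : theta β u Λ (n + 1) z (Fin.cons x xs) =
      z * ((boltz β (∑ i, u (x - xs i)) : ℝ) : ℂ) *
      ∑' l : ℕ, (1 / (Nat.factorial l : ℂ)) *
      ∫ y in cube Λ l, (∏ j, ((mayer β u (x - y j) : ℝ) : ℂ)) *
        theta β u Λ (n + l) z (Fin.append xs y) := by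
    rw [ks_theta, h2, mul_left_comm, ← tsum_mul_left]
    congr 2
    funext l
    simp_rw [ks_theta, ks_restrict, mul_left_comm _ (Xi β u Λ z)⁻¹]
    rw [integral_const_mul]
    ring
  rw [h4, h3.tsum_eq_zero_add]
  congr 2
  have h5 : ∀ y : Fin 0 → (Fin d → ℝ), theta β u Λ (n + 0) z (Fin.append xs y) =
      theta β u Λ n z xs := by
    intro y
    rw [Fin.append_right_nil _ _ rfl]
    exact ks_theta_cast β u Λ z _ xs
  simp_rw [h5, ks_restrict]
  simp [Measure.real, Measure.pi_univ]

end aux4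

/-- the family `(θ_Λ^{(n)}(z;·))_{n≥1}` satisfies the finite-volume
Kirkwood–Salsburg equations, with all series converging absolutely. -/
theorem statement16 {d : ℕ} (hd : 1 ≤ d) (β B : ℝ) (hβ : 0 < β) (hB : 0 ≤ B)
    (u : (Fin d → ℝ) → EReal) (hu : IsPairPotential u)
    (hstab : IsStable u B) (hreg : IsRegularPP β u)
    (Λ : Set (Fin d → ℝ)) (hΛb : IsBounded Λ) (hΛm : MeasurableSet Λ)
    (hXi : ∀ w : ℂ, ‖w‖ * (Real.exp (2 * β * B + 1) * Creg β u) < 1 →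
      Xi β u Λ w ≠ 0)
    (z : ℂ) (hz : ‖z‖ * (Real.exp (2 * β * B + 1) * Creg β u) < 1) :
    (∀ x ∈ Λ,
      Summable (fun k : ℕ =>
        ‖(1 / (Nat.factorial (k + 1) : ℂ)) *
          ∫ y in cube Λ (k + 1),
            (∏ j, ((mayer β u (x - y j) : ℝ) : ℂ)) * theta β u Λ (k + 1) z y‖) ∧
      theta β u Λ 1 z (fun _ => x) =
        z * (1 + ∑' k : ℕ, (1 / (Nat.factorial (k + 1) : ℂ)) *
          ∫ y in cube Λ (k + 1),
            (∏ j, ((mayer β u (x - y j) : ℝ) : ℂ)) * theta β u Λ (k + 1) z y)) ∧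
    (∀ (n : ℕ), 1 ≤ n → ∀ x ∈ Λ, ∀ (xs : Fin n → (Fin d → ℝ)), (∀ i, xs i ∈ Λ) →
      Summable (fun k : ℕ =>
        ‖(1 / (Nat.factorial (k + 1) : ℂ)) *
          ∫ y in cube Λ (k + 1),
            (∏ j, ((mayer β u (x - y j) : ℝ) : ℂ)) *
              theta β u Λ (n + (k + 1)) z (Fin.append xs y)‖) ∧
      theta β u Λ (n + 1) z (Fin.cons x xs) =
        z * ((boltz β (∑ i, u (x - xs i)) : ℝ) : ℂ) *
          (theta β u Λ n z xs +
            ∑' k : ℕ, (1 / (Nat.factorial (k + 1) : ℂ)) *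
              ∫ y in cube Λ (k + 1),
                (∏ j, ((mayer β u (x - y j) : ℝ) : ℂ)) *
                  theta β u Λ (n + (k + 1)) z (Fin.append xs y))) := by
  constructor
  · intro x _
    have h := ks_general hβ hu hstab Λ hΛb 0 z x Fin.elim0
    have h5 : ∀ (l : ℕ) (y : Fin l → (Fin d → ℝ)),
        theta β u Λ (0 + l) z (Fin.append Fin.elim0 y) = theta β u Λ l z y := by
      intro l y
      rw [Fin.elim0_append]
      exact ks_theta_cast β u Λ z _ y
    simp_rw [h5] at h
    rw [ks_theta_zero β u Λ z (hXi z hz)] at h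
    refine ⟨h.1, ?_⟩
    have h6 : (fun _ => x : Fin 1 → (Fin d → ℝ)) = Fin.cons x Fin.elim0 := by
      funext i
      rw [Subsingleton.elim i 0]; rfl
    rw [h6]
    have h7 := h.2
    simpa [ks_boltz_zero] using h7
  · intro n _ x _ xs _
    exact ks_general hβ hu hstab Λ hΛb n z x xs
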